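/- arXiv:2002.04870 — 2 statements merged into one kernel-verified Lean document; each statement's English description precedes it below -/
import Mathlib

section
/- For every real number ε with 0 < ε < 1 and every integer k ≥ 2, there exist a finite set P ⊂ ℝ of k+1 points and a point q ∈ ℝ (with the usual metric on ℝ) such that: there is p* ∈ P with |q − p*| < |q − y| for all y ∈ P∖{p*} (p* is the unique nearest neighbor of q in P), and every set S ⊆ P with |S| = k satisfying |p* − x| ≤ |p* − y| for all x ∈ S and y ∈ P∖S contains a point x₀ with |q − x₀| > 3·(1−ε)·r, where r is the k-nearest-neighbor radius of q in P. -/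
/-- `r` is the `k`-nearest-neighbor radius of `q` in the finite point set `P`. -/
def IsKNNRadius {M : Type*} [MetricSpace M] (P : Finset M) (k : ℕ) (q : M)
    (r : ℝ) : Prop :=
  ∃ T ⊆ P, T.card = k ∧
    (∀ x ∈ T, ∀ y ∈ P, y ∉ T → dist q x ≤ dist q y) ∧
    (∀ x ∈ T, dist q x ≤ r) ∧ (∃ x ∈ T, dist q x = r)

/-- A subset of `P` with one element less than `P` that misses `a` contains every other point. -/
theorem Finset.mem_of_notMem_of_card_eq_add_one {α : Type*} {P S : Finset α} {k : ℕ}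
    {a b : α} (hS : S ⊆ P) (hP : P.card = k + 1) (hk : S.card = k) (ha : a ∈ P) (haS : a ∉ S)
    (hb : b ∈ P) (hab : b ≠ a) : b ∈ S := by
  classical
  have h : insert a S = P := Finset.eq_of_subset_of_card_le
    (Finset.insert_subset ha hS) (by rw [Finset.card_insert_of_notMem haS, hP, hk])
  rw [← h] at hb
  exact Finset.mem_of_mem_insert_of_ne hb hab

/-- If every point of `P` but `f` is within distance `c` of `q` and `f` is farther away, the
`k`-nearest-neighbor radius for `k = |P| - 1` is at most `c`. -/
theorem IsKNNRadius.le_of_far_point {M : Type*} [MetricSpace M] {P : Finset M} {k : ℕ}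
    {q f : M} {r c : ℝ} (h : IsKNNRadius P k q r) (hP : P.card = k + 1)
    (hf : c < dist q f) (hc : ∀ x ∈ P, x ≠ f → dist q x ≤ c) : r ≤ c := by
  obtain ⟨T, hTP, hTk, hT, -, x, hx, rfl⟩ := h
  refine hc x (hTP hx) ?_
  rintro rfl
  obtain ⟨y, hy, hyT⟩ := Finset.exists_mem_notMem_of_card_lt_card (s := T) (t := P) (by omega)
  have hyx : y ≠ x := fun e => hyT (e ▸ hx)
  linarith [hT x hx y hy hyT, hc y hy hyx]

/-- The points of the construction on the query's side, increasing from `1 - ε / 2` towards `1`. -/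
noncomputable def clusterPoint (ε : ℝ) (i : ℕ) : ℝ := 1 - ε / 2 * (1 / ((i : ℝ) + 1))

theorem clusterPoint_zero (ε : ℝ) : clusterPoint ε 0 = 1 - ε / 2 := by
  simp [clusterPoint]

theorem clusterPoint_strictMono {ε : ℝ} (hε : 0 < ε) : StrictMono (clusterPoint ε) := by
  intro i j hij
  have := Nat.one_div_lt_one_div (α := ℝ) hij
  unfold clusterPoint
  gcongr

theorem clusterPoint_lt_one {ε : ℝ} (hε : 0 < ε) (i : ℕ) : clusterPoint ε i < 1 := by
  have : 0 < ε / 2 * (1 / ((i : ℝ) + 1)) := by positivity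
  unfold clusterPoint
  linarith

/-- tightness of the `3`-approximation analysis.
For every `ε ∈ (0,1)` and `k ≥ 2` there are `k+1` points on the real line
and a query `q` such that any set of `k` nearest neighbors of the (unique)
nearest neighbor of `q` contains a point at distance more than
`3(1-ε)·r` from `q`. -/
theorem three_approx_tightness (ε : ℝ) (hε0 : 0 < ε) (hε1 : ε < 1)
    (k : ℕ) (hk : 2 ≤ k) :
    ∃ P : Finset ℝ, P.card = k + 1 ∧
      ∃ q : ℝ, ∃ pstar ∈ P,
        (∀ y ∈ P, y ≠ pstar → dist q pstar < dist q y) ∧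
        ∀ S : Finset ℝ, S ⊆ P → S.card = k →
          (∀ x ∈ S, ∀ y ∈ P, y ∉ S → dist pstar x ≤ dist pstar y) →
          ∀ r : ℝ, IsKNNRadius P k q r →
            ∃ x₀ ∈ S, dist q x₀ > 3 * (1 - ε) * r := by
  obtain ⟨m, rfl⟩ := Nat.exists_eq_add_of_le' hk
  set c := clusterPoint ε
  set f : ℝ := 3 - 5 / 4 * ε with hf
  have hmono : StrictMono c := clusterPoint_strictMono hε0
  have hc0 : c 0 = 1 - ε / 2 := clusterPoint_zero ε
  have hlow (i : ℕ) : 1 - ε / 2 ≤ c i := hc0 ▸ hmono.monotone (Nat.zero_le i)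
  have hlt (i : ℕ) : c i < 1 := clusterPoint_lt_one hε0 i
  let P : Finset ℝ := insert (-1) (insert f ((Finset.range (m + 1)).image c))
  have hmem (x : ℝ) : x ∈ P ↔ x = -1 ∨ x = f ∨ ∃ i < m + 1, c i = x := by simp [P]
  have hcard : P.card = m + 2 + 1 := by
    rw [Finset.card_insert_of_notMem, Finset.card_insert_of_notMem,
      Finset.card_image_of_injective _ hmono.injective, Finset.card_range]
    · simp only [Finset.mem_image, not_exists, not_and]
      intro i _ h
      linarith [hlt i]
    · simp only [Finset.mem_insert, Finset.mem_image, not_or, not_exists, not_and]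
      refine ⟨fun h => by linarith, fun i _ h => ?_⟩
      linarith [hlow i]
  have hfq : dist 0 f = f := by
    rw [dist_comm, Real.dist_0_eq_abs, abs_of_pos (by linarith)]
  have hcq (i : ℕ) : dist 0 (c i) = c i := by
    rw [dist_comm, Real.dist_0_eq_abs, abs_of_pos (by linarith [hlow i])]
  have hnq : dist (0 : ℝ) (-1) = 1 := by simp
  have hfP : f ∈ P := (hmem f).2 (by simp)
  refine ⟨P, hcard, 0, c 0, (hmem _).2 (Or.inr (Or.inr ⟨0, by omega, rfl⟩)), ?_, ?_⟩
  · intro y hy hne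
    rw [hcq]
    rcases (hmem y).1 hy with rfl | rfl | ⟨i, -, rfl⟩
    · rw [hnq]; exact hlt 0
    · rw [hfq]; linarith
    · rw [hcq]
      exact hmono (Nat.pos_of_ne_zero fun h => hne (by rw [h]))
  · intro S hSP hSk hS r hr
    have hr1 : r ≤ 1 := by
      refine hr.le_of_far_point hcard (f := f) (by rw [hfq]; linarith) fun x hx hxf => ?_
      rcases (hmem x).1 hx with rfl | rfl | ⟨i, -, rfl⟩
      · exact hnq.le
      · exact absurd rfl hxf
      · rw [hcq]; exact (hlt i).le
    refine ⟨f, ?_, ?_⟩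
    · by_contra hfS
      have hneg : (-1 : ℝ) ∈ S := Finset.mem_of_notMem_of_card_eq_add_one hSP hcard hSk hfP hfS
        ((hmem _).2 (Or.inl rfl)) (by linarith)
      have h := hS (-1) hneg f hfP hfS
      rw [Real.dist_eq, Real.dist_eq, abs_of_pos (by linarith), abs_of_neg (by linarith)] at h
      linarith
    · rw [hfq]
      nlinarith [mul_le_mul_of_nonneg_left hr1 (by linarith : 0 ≤ 3 * (1 - ε))]
end

section
/- For every real number c > 1 there exists a constant a > 0 such that the following holds for all positive integers d, n, k, B with n ≥ 2 and k ≤ n. For every set P of n points in {0,1}ᵈ there exists a family 𝓑 of at most n^a · d² · ⌈k/B⌉ subsets of P, each of cardinality at most B, such that for every q ∈ {0,1}ᵈ there exist a subfamily 𝓒 ⊆ 𝓑 with |𝓒| ≤ ⌈k/B⌉ and a set S ⊆ ⋃𝓒 with |S| = k such that hammingDist(q, x) ≤ c·r for all x ∈ S, where r is the k-nearest-neighbor radius of q in P under the Hamming metric. -/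
/-- `r` is the `k`-nearest-neighbor radius of `q` in the finite set `P` of
points of Hamming space `{0,1}ᵈ`. -/
def IsHammingKNNRadius {d : ℕ} (P : Finset (Fin d → Bool)) (k : ℕ)
    (q : Fin d → Bool) (r : ℕ) : Prop :=
  ∃ T ⊆ P, T.card = k ∧
    (∀ x ∈ T, ∀ y ∈ P, y ∉ T → hammingDist q x ≤ hammingDist q y) ∧
    (∀ x ∈ T, hammingDist q x ≤ r) ∧ (∃ x ∈ T, hammingDist q x = r)

/-- If every point is related to at least half of the elements of `Ω`, then any set of fewer than
`2 ^ s` points is covered by some `s` elements of `Ω`. -/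
theorem exists_small_cover_of_half {Q Ω : Type*} [Fintype Ω] [Nonempty Ω]
    (G : Ω → Q → Prop) [∀ ω q, Decidable (G ω q)]
    (hG : ∀ q, Fintype.card Ω ≤ 2 * (Finset.univ.filter fun ω => G ω q).card) (s : ℕ) :
    ∀ X : Finset Q, X.card < 2 ^ s →
      ∃ F : Finset Ω, F.card ≤ s ∧ ∀ q ∈ X, ∃ ω ∈ F, G ω q := by
  classical
  induction s with
  | zero =>
    intro X hX
    have : X = ∅ := by simpa using hX
    exact ⟨∅, by simp, by simp [this]⟩
  | succ s ih =>
    intro X hX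
    rcases X.eq_empty_or_nonempty with rfl | ⟨q₀, hq₀⟩
    · exact ⟨∅, by simp, by simp⟩
    have hex : ∃ ω : Ω, X.card ≤ 2 * (X.filter fun q => G ω q).card := by
      by_contra! hcon
      have hdc : ∑ ω : Ω, (X.filter fun q => G ω q).card
          = ∑ q ∈ X, (Finset.univ.filter fun ω => G ω q).card := by
        simp only [Finset.card_filter]
        exact Finset.sum_comm
      have h1 : X.card * Fintype.card Ω ≤ 2 * ∑ ω : Ω, (X.filter fun q => G ω q).card := by
        rw [hdc, Finset.mul_sum, ← smul_eq_mul]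
        exact Finset.card_nsmul_le_sum _ _ _ fun q _ => hG q
      have h2 : ∑ ω : Ω, 2 * (X.filter fun q => G ω q).card < ∑ _ω : Ω, X.card :=
        Finset.sum_lt_sum_of_nonempty Finset.univ_nonempty fun ω _ => hcon ω
      rw [← Finset.mul_sum, Finset.sum_const, Finset.card_univ, smul_eq_mul, mul_comm _ X.card]
        at h2
      omega
    obtain ⟨ω, hω⟩ := hex
    have hsplit := Finset.card_filter_add_card_filter_not (s := X) (fun q => G ω q)
    obtain ⟨F, hF, hcov⟩ := ih (X.filter fun q => ¬ G ω q) (by rw [pow_succ] at hX; omega)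
    refine ⟨insert ω F, (Finset.card_insert_le _ _).trans (by omega), fun q hq => ?_⟩
    by_cases h : G ω q
    · exact ⟨ω, Finset.mem_insert_self _ _, h⟩
    · obtain ⟨ω', h', h''⟩ := hcov q (by simp [hq, h])
      exact ⟨ω', Finset.mem_insert_of_mem h', h''⟩

/-- A Chernoff bound for `m` independent uniform samples, in counting form. -/
theorem card_filter_sum_ge_le {α : Type*} [Fintype α] (Y : α → ℝ) (hY : ∀ a, |Y a| ≤ 1)
    (μ δ : ℝ) (hμ : ∑ a, Y a ≤ μ * Fintype.card α) (hδ : 0 < δ) (hδ1 : δ ≤ 1) (m : ℕ) :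
    ((Finset.univ.filter fun ω : Fin m → α => m * (μ + δ) ≤ ∑ j, Y (ω j)).card : ℝ)
      ≤ (Fintype.card α : ℝ) ^ m * Real.exp (-(m * δ ^ 2 / 4)) := by
  set l : ℝ := δ / 2 with hl
  have hmgf : ∑ a, Real.exp (l * Y a) ≤ Fintype.card α * Real.exp (l * μ + l ^ 2) := by
    calc ∑ a, Real.exp (l * Y a) ≤ ∑ a, (1 + l * Y a + l ^ 2) := by
          refine Finset.sum_le_sum fun a _ => ?_
          have h1 : |l * Y a| ≤ l := by
            rw [abs_mul, abs_of_pos (by positivity : 0 < l)]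
            nlinarith [hY a, abs_nonneg (Y a)]
          have h2 := (abs_le.1 (Real.abs_exp_sub_one_sub_id_le (h1.trans (by linarith)))).2
          have h3 : (l * Y a) ^ 2 ≤ l ^ 2 := sq_le_sq' (abs_le.1 h1).1 (abs_le.1 h1).2
          linarith
      _ = Fintype.card α * (1 + l ^ 2) + l * ∑ a, Y a := by
          simp only [Finset.sum_add_distrib, Finset.mul_sum, Finset.sum_const, Finset.card_univ,
            nsmul_eq_mul]
          ring
      _ ≤ Fintype.card α * (l * μ + l ^ 2 + 1) := by nlinarith
      _ ≤ _ := by gcongr; exact Real.add_one_le_exp _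
  calc ((Finset.univ.filter fun ω : Fin m → α => m * (μ + δ) ≤ ∑ j, Y (ω j)).card : ℝ)
      = ∑ ω ∈ Finset.univ.filter fun ω : Fin m → α => m * (μ + δ) ≤ ∑ j, Y (ω j), (1 : ℝ) := by
        simp
    _ ≤ ∑ ω ∈ Finset.univ.filter fun ω : Fin m → α => m * (μ + δ) ≤ ∑ j, Y (ω j),
          Real.exp (l * ∑ j, Y (ω j) - l * (m * (μ + δ))) := by
        refine Finset.sum_le_sum fun ω hω => Real.one_le_exp ?_
        have := (Finset.mem_filter.1 hω).2
        nlinarith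
    _ ≤ ∑ ω : Fin m → α, Real.exp (l * ∑ j, Y (ω j) - l * (m * (μ + δ))) :=
        Finset.sum_le_sum_of_subset_of_nonneg (Finset.filter_subset _ _)
          fun _ _ _ => (Real.exp_pos _).le
    _ = (∑ a, Real.exp (l * Y a)) ^ m * Real.exp (-(l * (m * (μ + δ)))) := by
        rw [Fintype.sum_pow, Finset.sum_mul]
        refine Finset.sum_congr rfl fun ω _ => ?_
        rw [← Real.exp_sum, ← Real.exp_add, Finset.mul_sum, sub_eq_add_neg]
    _ ≤ (Fintype.card α * Real.exp (l * μ + l ^ 2)) ^ m * Real.exp (-(l * (m * (μ + δ)))) := by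
        gcongr
    _ = _ := by
        rw [mul_pow, ← Real.exp_nat_mul, mul_assoc, ← Real.exp_add]
        congr 2
        rw [hl]; ring

/-- A number of samples `t` for which the powers of `1 - D / d` separate near from far. -/
theorem exists_exponent_gap (c : ℝ) (hc : 1 < c) :
    ∃ δ : ℝ, 0 < δ ∧ δ ≤ 1 ∧ ∀ d r : ℕ, 0 < r → c * r < d → ∃ (t : ℕ) (A : ℝ),
      (∀ D : ℕ, D ≤ r → A ≤ (1 - (D : ℝ) / d) ^ t) ∧
      ∀ D : ℕ, D ≤ d → c * r < D → (1 - (D : ℝ) / d) ^ t ≤ A - 2 * δ := by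
  have hc0 : 0 < c := by linarith
  have hinv : c⁻¹ < 1 := inv_lt_one_of_one_lt₀ hc
  have hhalf : (1 / 2 : ℝ) ^ (c - 1) < 1 :=
    Real.rpow_lt_one (by norm_num) (by norm_num) (by linarith)
  have hhalf0 : 0 < (1 / 2 : ℝ) ^ (c - 1) := by positivity
  have hinv0 : 0 < c⁻¹ := by positivity
  refine ⟨(1 - c⁻¹) / 4 * (1 - (1 / 2 : ℝ) ^ (c - 1)), ?_, ?_, ?_⟩
  · have : 0 < 1 - c⁻¹ := by linarith
    have : 0 < 1 - (1 / 2 : ℝ) ^ (c - 1) := by linarith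
    positivity
  · nlinarith
  intro d r hr hrd
  have hrR : (0 : ℝ) < r := by exact_mod_cast hr
  have hd : (0 : ℝ) < d := lt_trans (by positivity) hrd
  set u : ℝ := r / d with hu
  have hu0 : 0 < u := by positivity
  have hcu : c * u < 1 := by rw [hu, ← mul_div_assoc, div_lt_one hd]; exact hrd
  have huc : u < c⁻¹ := by rwa [lt_inv_comm₀ hu0 hc0, ← one_div, lt_div_iff₀ hu0]
  have hex : ∃ t : ℕ, (1 - u) ^ t < 1 / 2 :=
    exists_pow_lt_of_lt_one (by norm_num) (by linarith)
  classical
  obtain ⟨t, ht, hmin⟩ : ∃ t : ℕ, (1 - u) ^ t < 1 / 2 ∧ ∀ s < t, 1 / 2 ≤ (1 - u) ^ s :=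
    ⟨Nat.find hex, Nat.find_spec hex, fun s hs => not_lt.1 (Nat.find_min hex hs)⟩
  have ht0 : t ≠ 0 := by rintro rfl; norm_num at ht
  obtain ⟨s, rfl⟩ := Nat.exists_eq_succ_of_ne_zero ht0
  have hA : (1 - c⁻¹) / 2 ≤ (1 - u) ^ (s + 1) := by
    rw [pow_succ]
    have := hmin s (Nat.lt_succ_self s)
    nlinarith
  have hA0 : 0 < (1 - u) ^ (s + 1) := by
    have : 0 < 1 - u := by linarith
    positivity
  refine ⟨s + 1, (1 - u) ^ (s + 1), fun D hD => ?_, fun D hDd hD => ?_⟩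
  · have : (D : ℝ) / d ≤ u := by rw [hu]; gcongr
    exact pow_le_pow_left₀ (by linarith) (by linarith) _
  · have h1 : c * u ≤ (D : ℝ) / d := by
      rw [hu, ← mul_div_assoc]; gcongr
    have h2 : (D : ℝ) / d ≤ 1 := by
      rw [div_le_one hd]; exact_mod_cast hDd
    have h3 : 1 - c * u ≤ (1 - u) ^ c := by
      have := one_add_mul_self_le_rpow_one_add (s := -u) (by linarith) hc.le
      simpa [sub_eq_add_neg] using this
    set A := (1 - u) ^ (s + 1) with hAdef
    have h4 : (1 - (D : ℝ) / d) ^ (s + 1) ≤ A ^ c := by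
      calc (1 - (D : ℝ) / d) ^ (s + 1) ≤ ((1 - u) ^ c) ^ (s + 1) :=
            pow_le_pow_left₀ (by linarith) (by linarith) _
        _ = A ^ c := by
            rw [hAdef, ← Real.rpow_natCast, ← Real.rpow_natCast, ← Real.rpow_mul (by linarith),
              ← Real.rpow_mul (by linarith), mul_comm]
    have h5 : A ^ c = A * A ^ (c - 1) := by
      rw [Real.rpow_sub hA0, Real.rpow_one]; field_simp
    have h6 : A ^ (c - 1) ≤ (1 / 2 : ℝ) ^ (c - 1) :=
      Real.rpow_le_rpow hA0.le ht.le (by linarith)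
    nlinarith

/-- The random sign of `x` given by the parity of the sampled coordinates `i` with flag `true`. -/
def paritySign {d t : ℕ} (w : Fin t → Fin d × Bool) (x : Fin d → Bool) : ℝ :=
  ∏ j, if (w j).2 && x (w j).1 then -1 else 1

theorem paritySign_eq_one_or {d t : ℕ} (w : Fin t → Fin d × Bool) (x : Fin d → Bool) :
    paritySign w x = 1 ∨ paritySign w x = -1 := by
  unfold paritySign
  refine Finset.prod_induction _ (fun y : ℝ => y = 1 ∨ y = -1) ?_ (Or.inl rfl) ?_
  · rintro a b (rfl | rfl) (rfl | rfl) <;> norm_num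
  · intro j _
    split_ifs <;> simp

theorem sum_paritySign_mul {d t : ℕ} (hd : 0 < d) (q x : Fin d → Bool) :
    ∑ w : Fin t → Fin d × Bool, paritySign w q * paritySign w x
      = (1 - (hammingDist q x : ℝ) / d) ^ t * Fintype.card (Fin t → Fin d × Bool) := by
  have hd' : (d : ℝ) ≠ 0 := by positivity
  have hone : ∑ p : Fin d × Bool, ((if p.2 && q p.1 then (-1 : ℝ) else 1)
      * (if p.2 && x p.1 then -1 else 1)) = (1 - (hammingDist q x : ℝ) / d) * (d * 2) := by
    have hterm : ∀ i : Fin d, ∑ b : Bool, ((if b && q i then (-1 : ℝ) else 1)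
        * (if b && x i then -1 else 1)) = 2 - 2 * (if q i ≠ x i then 1 else 0) := by
      intro i
      cases q i <;> cases x i <;> norm_num
    rw [Fintype.sum_prod_type, Finset.sum_congr rfl fun i _ => hterm i, Finset.sum_sub_distrib,
      ← Finset.mul_sum, Finset.sum_boole]
    simp only [Finset.sum_const, Finset.card_univ, Fintype.card_fin, nsmul_eq_mul, hammingDist]
    field_simp
  simp only [paritySign, ← Finset.prod_mul_distrib]
  rw [← Fintype.sum_pow (fun p : Fin d × Bool => (if p.2 && q p.1 then (-1 : ℝ) else 1)
      * (if p.2 && x p.1 then -1 else 1)), hone]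
  simp [mul_pow]

/-- A set of candidates determined by a collection of parity samples and a vector of signs. -/
noncomputable def sketchBall {d t m : ℕ} (P : Finset (Fin d → Bool)) (θ : ℝ)
    (ω : Fin m → Fin t → Fin d × Bool) (g : Fin m → Bool) : Finset (Fin d → Bool) :=
  P.filter fun x => θ ≤ ∑ j, (if g j then 1 else -1) * paritySign (ω j) x

/-- Separating near from far points at a fixed scale by `n ^ a * d` subsets of `P`. -/
theorem exists_separating_family (c : ℝ) (hc : 1 < c) :
    ∃ a : ℕ, ∀ d n r : ℕ, 0 < d → 2 ≤ n → ∀ P : Finset (Fin d → Bool), P.card = n →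
      ∃ 𝓦 : Finset (Finset (Fin d → Bool)), 𝓦.card ≤ n ^ a * d ∧ (∀ W ∈ 𝓦, W ⊆ P) ∧
        ∀ q : Fin d → Bool, ∃ W ∈ 𝓦, (∀ x ∈ P, hammingDist q x ≤ r → x ∈ W) ∧
          ∀ x ∈ W, (hammingDist q x : ℝ) ≤ c * r := by
  classical
  obtain ⟨δ, hδ, hδ1, hgap⟩ := exists_exponent_gap c hc
  obtain ⟨C, hC⟩ := exists_nat_ge (8 / δ ^ 2)
  refine ⟨2 * C + 2, fun d n r hd hn P hP => ?_⟩
  have hn1 : 1 ≤ n := by omega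
  by_cases hrd : (d : ℝ) ≤ c * r
  · refine ⟨{P}, ?_, by simp, fun q => ⟨P, by simp, fun x hx _ => hx, fun x _ => ?_⟩⟩
    · rw [Finset.card_singleton]
      exact Nat.mul_pos (by positivity) hd
    · refine le_trans ?_ hrd
      have := hammingDist_le_card_fintype (x := q) (y := x)
      rw [Fintype.card_fin] at this
      exact_mod_cast this
  rcases Nat.eq_zero_or_pos r with rfl | hr
  · refine ⟨insert ∅ (P.image fun x => {x}), ?_, ?_, fun q => ?_⟩
    · calc _ ≤ (P.image fun x => ({x} : Finset (Fin d → Bool))).card + 1 :=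
            Finset.card_insert_le _ _
        _ ≤ n + 1 := by rw [← hP]; exact Nat.succ_le_succ Finset.card_image_le
        _ ≤ n ^ 2 * 1 := by nlinarith
        _ ≤ _ := Nat.mul_le_mul (Nat.pow_le_pow_right hn1 (by omega)) hd
    · intro W hW
      simp only [Finset.mem_insert, Finset.mem_image] at hW
      rcases hW with rfl | ⟨x, hx, rfl⟩
      · simp
      · simpa using hx
    · by_cases hq : q ∈ P
      · refine ⟨{q}, by simp [hq], fun x _ h => ?_, by simp⟩
        simp at h
        simp [h]
      · refine ⟨∅, by simp, fun x hx h => ?_, by simp⟩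
        simp at h
        exact absurd (h ▸ hx) hq
  push Not at hrd
  obtain ⟨t, A, hnear, hfar⟩ := hgap d r hr hrd
  set L := Nat.clog 2 n with hL
  have hL1 : n ≤ 2 ^ L := Nat.le_pow_clog (by norm_num) n
  have hL2 : 2 ^ L ≤ n ^ 2 := by
    have := Nat.pow_pred_clog_lt_self (b := 2) (by norm_num) hn
    have hLpos : 0 < L := Nat.clog_pos (by norm_num) hn
    have h2 : 2 ^ L = 2 ^ L.pred * 2 := by
      rw [← pow_succ]
      congr 1
      exact (Nat.succ_pred_eq_of_pos hLpos).symm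
    nlinarith
  set m := C * L with hm
  set θ : ℝ := m * (A - δ) with hθ
  let Ω := Fin m → Fin t → Fin d × Bool
  let Z : (Fin d → Bool) → (Fin d → Bool) → Ω → ℝ := fun q x ω =>
    ∑ j, paritySign (ω j) q * paritySign (ω j) x
  let G : Ω → (Fin d → Bool) → Prop := fun ω q =>
    ∀ x ∈ P, (hammingDist q x ≤ r → θ ≤ Z q x ω) ∧ (θ ≤ Z q x ω → (hammingDist q x : ℝ) ≤ c * r)
  have hcardΩ : (Fintype.card Ω : ℝ) = (Fintype.card (Fin t → Fin d × Bool) : ℝ) ^ m := by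
    simp [Ω]
  have habs : ∀ q x : Fin d → Bool, ∀ w : Fin t → Fin d × Bool,
      |paritySign w q * paritySign w x| ≤ 1 := by
    intro q x w
    rcases paritySign_eq_one_or w q with h | h <;> rcases paritySign_eq_one_or w x with h' | h' <;>
      simp [h, h']
  have hexp : (n : ℝ) * Real.exp (-(m * δ ^ 2 / 4)) ≤ 1 / 2 := by
    have h1 : 2 * (L : ℝ) ≤ m * δ ^ 2 / 4 := by
      rw [div_le_iff₀ (by positivity)] at hC
      rw [hm]; push_cast
      nlinarith [(Nat.cast_nonneg L : (0 : ℝ) ≤ L)]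
    have h2 : (2 : ℝ) ^ L ≤ Real.exp L := by
      have : (2 : ℝ) ≤ Real.exp 1 := by linarith [Real.add_one_le_exp (1 : ℝ)]
      calc (2 : ℝ) ^ L ≤ Real.exp 1 ^ L := by gcongr
        _ = Real.exp L := by rw [← Real.exp_nat_mul, mul_one]
    have h3 : (n : ℝ) ≤ Real.exp L := le_trans (by exact_mod_cast hL1) h2
    have hnR : (2 : ℝ) ≤ n := by exact_mod_cast hn
    have h4 : Real.exp (-(m * δ ^ 2 / 4)) ≤ (Real.exp L * Real.exp L)⁻¹ := by
      rw [← Real.exp_add, ← Real.exp_neg]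
      exact Real.exp_le_exp.2 (by linarith)
    calc (n : ℝ) * Real.exp (-(m * δ ^ 2 / 4)) ≤ n * ((n : ℝ) * n)⁻¹ := by
          refine mul_le_mul_of_nonneg_left (h4.trans ?_) (by positivity)
          gcongr
      _ = (n : ℝ)⁻¹ := by field_simp
      _ ≤ 1 / 2 := by rw [one_div]; gcongr
  have hhalf : ∀ q, Fintype.card Ω ≤ 2 * (Finset.univ.filter fun ω : Ω => G ω q).card := by
    intro q
    let bad : (Fin d → Bool) → Finset Ω := fun x => Finset.univ.filter fun ω =>
      ¬((hammingDist q x ≤ r → θ ≤ Z q x ω) ∧ (θ ≤ Z q x ω → (hammingDist q x : ℝ) ≤ c * r))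
    have hbad : ∀ x, ((bad x).card : ℝ) ≤ Fintype.card Ω * Real.exp (-(m * δ ^ 2 / 4)) := by
      intro x
      rw [hcardΩ]
      by_cases hx : hammingDist q x ≤ r
      · have hch := card_filter_sum_ge_le
          (fun w : Fin t → Fin d × Bool => -(paritySign w q * paritySign w x))
          (fun w => by rw [abs_neg]; exact habs q x w) (-A) δ (by
            rw [Finset.sum_neg_distrib, sum_paritySign_mul hd, ← neg_mul]
            gcongr
            exact hnear _ hx) hδ hδ1 m
        refine le_trans ?_ hch
        norm_cast
        refine Finset.card_le_card fun ω hω => ?_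
        simp only [bad, Finset.mem_filter, Finset.mem_univ, true_and] at hω ⊢
        have hxc : (hammingDist q x : ℝ) ≤ c * r := by
          have : (hammingDist q x : ℝ) ≤ r := by exact_mod_cast hx
          nlinarith [(Nat.cast_nonneg r : (0 : ℝ) ≤ r)]
        have : Z q x ω < θ := by
          by_contra! h
          exact hω ⟨fun _ => h, fun _ => hxc⟩
        rw [Finset.sum_neg_distrib]
        simp only [Z, hθ] at this
        linarith
      · by_cases hxf : (hammingDist q x : ℝ) ≤ c * r
        · have : bad x = ∅ := by simp [bad, hx, hxf]
          rw [this]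
          simp only [Finset.card_empty, Nat.cast_zero]
          positivity
        · have hch := card_filter_sum_ge_le
            (fun w : Fin t → Fin d × Bool => paritySign w q * paritySign w x)
            (habs q x) (A - 2 * δ) δ (by
              rw [sum_paritySign_mul hd]
              gcongr
              refine hfar _ ?_ (not_le.1 hxf)
              simpa using hammingDist_le_card_fintype (x := q) (y := x)) hδ hδ1 m
          refine le_trans ?_ hch
          norm_cast
          refine Finset.card_le_card fun ω hω => ?_
          simp only [bad, Finset.mem_filter, Finset.mem_univ, true_and] at hω ⊢
          have : θ ≤ Z q x ω := by
            by_contra h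
            exact hω ⟨fun h' => absurd h' hx, fun h' => absurd h' h⟩
          simp only [Z, hθ] at this
          linarith
    have hcover : (Finset.univ.filter fun ω : Ω => ¬ G ω q) ⊆ P.biUnion bad := by
      intro ω hω
      simp only [G, Finset.mem_filter, Finset.mem_univ, true_and] at hω
      push Not at hω
      simp only [bad, Finset.mem_biUnion, Finset.mem_filter, Finset.mem_univ, true_and]
      by_contra! hcon
      obtain ⟨x, hx, hxω⟩ := hω
      obtain ⟨h1, h2⟩ := hcon x hx
      have := hxω h1
      exact absurd (h2 this.1) (not_le.2 this.2)
    have hbadcard : ((Finset.univ.filter fun ω : Ω => ¬ G ω q).card : ℝ)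
        ≤ Fintype.card Ω * (1 / 2) := by
      calc ((Finset.univ.filter fun ω : Ω => ¬ G ω q).card : ℝ)
          ≤ ((∑ x ∈ P, (bad x).card : ℕ) : ℝ) := by
            exact_mod_cast (Finset.card_le_card hcover).trans Finset.card_biUnion_le
        _ ≤ ∑ _x ∈ P, (Fintype.card Ω * Real.exp (-(m * δ ^ 2 / 4)) : ℝ) := by
            push_cast
            exact Finset.sum_le_sum fun x _ => hbad x
        _ = Fintype.card Ω * (n * Real.exp (-(m * δ ^ 2 / 4))) := by
            rw [Finset.sum_const, hP, nsmul_eq_mul]; ring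
        _ ≤ _ := by gcongr
    have hsplit := Finset.card_filter_add_card_filter_not (s := (Finset.univ : Finset Ω))
      (fun ω => G ω q)
    rw [Finset.card_univ] at hsplit
    have h2 : 2 * (Finset.univ.filter fun ω : Ω => ¬ G ω q).card ≤ Fintype.card Ω := by
      have : (2 : ℝ) * (Finset.univ.filter fun ω : Ω => ¬ G ω q).card ≤ Fintype.card Ω := by
        linarith
      exact_mod_cast this
    omega
  have : Nonempty Ω := ⟨fun _ _ => (⟨0, hd⟩, true)⟩
  obtain ⟨F, hF, hcov⟩ := exists_small_cover_of_half G hhalf (d + 1)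
    (Finset.univ : Finset (Fin d → Bool)) (by simp [pow_succ])
  refine ⟨(F ×ˢ (Finset.univ : Finset (Fin m → Bool))).image
    fun p => sketchBall P θ p.1 p.2, ?_, ?_, fun q => ?_⟩
  · calc _ ≤ F.card * 2 ^ m := by
          refine Finset.card_image_le.trans ?_
          simp [Finset.card_product]
      _ ≤ (n * d) * n ^ (2 * C + 1) := by
          refine Nat.mul_le_mul (by nlinarith) ?_
          calc 2 ^ m = (2 ^ L) ^ C := by rw [hm, mul_comm, pow_mul]
            _ ≤ (n ^ 2) ^ C := Nat.pow_le_pow_left hL2 _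
            _ = n ^ (2 * C) := by rw [pow_mul]
            _ ≤ _ := Nat.pow_le_pow_right hn1 (by omega)
      _ = _ := by ring
  · intro W hW
    obtain ⟨p, -, rfl⟩ := Finset.mem_image.1 hW
    exact Finset.filter_subset _ _
  · obtain ⟨ω, hωF, hω⟩ := hcov q (Finset.mem_univ _)
    let g : Fin m → Bool := fun j => decide (paritySign (ω j) q = 1)
    have hg : ∀ j, (if g j then (1 : ℝ) else -1) = paritySign (ω j) q := by
      intro j
      rcases paritySign_eq_one_or (ω j) q with h | h <;> norm_num [g, h]
    have hmem : ∀ x, x ∈ sketchBall P θ ω g ↔ x ∈ P ∧ θ ≤ Z q x ω := by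
      intro x
      simp only [sketchBall, Finset.mem_filter, hg, Z]
    refine ⟨sketchBall P θ ω g, Finset.mem_image.2 ⟨(ω, g), by simp [hωF], rfl⟩, ?_, ?_⟩
    · exact fun x hx hxr => (hmem x).2 ⟨hx, (hω x hx).1 hxr⟩
    · exact fun x hx => (hω x ((hmem x).1 hx).1).2 ((hmem x).1 hx).2

/-- A finite set of at most `N * B` elements is covered by `N` of its subsets of size `B`. -/
theorem exists_block_cover {α : Type*} [DecidableEq α] (B N : ℕ) :
    ∀ S : Finset α, S.card ≤ N * B → ∃ 𝓒 : Finset (Finset α), 𝓒.card ≤ N ∧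
      (∀ b ∈ 𝓒, b ⊆ S ∧ b.card ≤ B) ∧ S ⊆ 𝓒.sup id := by
  induction N with
  | zero =>
    intro S hS
    have : S = ∅ := by simpa using hS
    exact ⟨∅, by simp, by simp, by simp [this]⟩
  | succ N ih =>
    intro S hS
    obtain ⟨b, hbS, hb⟩ := Finset.exists_subset_card_eq (s := S) (n := min B S.card) (by omega)
    have hcard := Finset.card_sdiff_of_subset hbS
    obtain ⟨𝓒, h1, h2, h3⟩ := ih (S \ b) (by rw [Nat.succ_mul] at hS; omega)
    refine ⟨insert b 𝓒, (Finset.card_insert_le _ _).trans (by omega), ?_, ?_⟩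
    · intro b' hb'
      rcases Finset.mem_insert.1 hb' with rfl | h
      · exact ⟨hbS, by omega⟩
      · exact ⟨(h2 b' h).1.trans Finset.sdiff_subset, (h2 b' h).2⟩
    · intro x hx
      rw [Finset.sup_insert]
      by_cases hxb : x ∈ b
      · exact Finset.mem_union_left _ hxb
      · exact Finset.mem_union_right _ (h3 (by simp [hx, hxb]))

/-- Theorem 4, Hamming indexing scheme: for every `c > 1`
there is a polynomial-space family of blocks answering `c`-approximate
`k`-nearest-neighbor queries in Hamming space in `⌈k/B⌉` I/Os. -/
theorem hamming_approx_indexing_scheme (c : ℝ) (hc : 1 < c) :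
    ∃ a : ℝ, 0 < a ∧
      ∀ d n k B : ℕ, 0 < d → 0 < n → 0 < k → 0 < B → 2 ≤ n → k ≤ n →
      ∀ P : Finset (Fin d → Bool), P.card = n →
      ∃ 𝓑 : Finset (Finset (Fin d → Bool)),
        (𝓑.card : ℝ) ≤ (n : ℝ) ^ a * (d : ℝ) ^ 2 * (⌈(k : ℝ) / (B : ℝ)⌉₊ : ℝ) ∧
        (∀ b ∈ 𝓑, b ⊆ P ∧ b.card ≤ B) ∧
        ∀ q : Fin d → Bool, ∀ r : ℕ, IsHammingKNNRadius P k q r →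
          ∃ 𝓒 ⊆ 𝓑, 𝓒.card ≤ ⌈(k : ℝ) / (B : ℝ)⌉₊ ∧
            ∃ S ⊆ 𝓒.sup id, S.card = k ∧
              ∀ x ∈ S, (hammingDist q x : ℝ) ≤ c * (r : ℝ) := by
  classical
  obtain ⟨a, ha⟩ := exists_separating_family c hc
  refine ⟨(a + 1 : ℕ), by positivity, ?_⟩
  intro d n k B hd hn0 hk hB hn hkn P hP
  choose 𝓦 hcard hsub hsep using fun r => ha d n r hd hn P hP
  set N := ⌈(k : ℝ) / (B : ℝ)⌉₊ with hN
  have hkN : k ≤ N * B := by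
    have h := Nat.le_ceil ((k : ℝ) / (B : ℝ))
    rw [div_le_iff₀ (by exact_mod_cast hB)] at h
    exact_mod_cast h
  have hblocks : ∀ W : Finset (Fin d → Bool), ∃ 𝓒 : Finset (Finset (Fin d → Bool)),
      𝓒.card ≤ N ∧ (∀ b ∈ 𝓒, b ⊆ W ∧ b.card ≤ B) ∧
        (k ≤ W.card → ∃ S ⊆ 𝓒.sup id, S ⊆ W ∧ S.card = k) := by
    intro W
    by_cases hW : k ≤ W.card
    · obtain ⟨S, hSW, hS⟩ := Finset.exists_subset_card_eq hW
      obtain ⟨𝓒, h1, h2, h3⟩ := exists_block_cover B N S (hS ▸ hkN)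
      exact ⟨𝓒, h1, fun b hb => ⟨(h2 b hb).1.trans hSW, (h2 b hb).2⟩, fun _ => ⟨S, h3, hSW, hS⟩⟩
    · exact ⟨∅, by simp, by simp, fun h => absurd h hW⟩
  choose blocks hb1 hb2 hb3 using hblocks
  refine ⟨(Finset.range (d + 1)).biUnion fun r => (𝓦 r).biUnion blocks, ?_, ?_, ?_⟩
  · have h : ((Finset.range (d + 1)).biUnion fun r => (𝓦 r).biUnion blocks).card
        ≤ n ^ (a + 1) * d ^ 2 * N := by
      calc _ ≤ (Finset.range (d + 1)).card * (n ^ a * d * N) := by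
            refine Finset.card_biUnion_le_card_mul _ _ _ fun r _ => ?_
            exact (Finset.card_biUnion_le_card_mul _ _ N fun W _ => hb1 W).trans
              (Nat.mul_le_mul_right _ (hcard r))
        _ ≤ (n * d) * (n ^ a * d * N) := by
            rw [Finset.card_range]
            exact Nat.mul_le_mul_right _ (by nlinarith)
        _ = _ := by ring
    rw [Real.rpow_natCast]
    exact_mod_cast h
  · intro b hb
    simp only [Finset.mem_biUnion] at hb
    obtain ⟨r, -, W, hW, hbW⟩ := hb
    exact ⟨(hb2 W b hbW).1.trans (hsub r W hW), (hb2 W b hbW).2⟩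
  · rintro q r ⟨T, hTP, hTk, -, hTr, x₀, -, hx₀⟩
    have hrd : r ≤ d := by
      simpa [hx₀] using hammingDist_le_card_fintype (x := q) (y := x₀)
    obtain ⟨W, hW, hnear, hfar⟩ := hsep r q
    have hkW : k ≤ W.card :=
      hTk ▸ Finset.card_le_card fun x hx => hnear x (hTP hx) (hTr x hx)
    obtain ⟨S, hS, hSW, hSk⟩ := hb3 W hkW
    refine ⟨blocks W, fun b hb => ?_, hb1 W, S, hS, hSk, fun x hx => hfar x (hSW hx)⟩
    simp only [Finset.mem_biUnion, Finset.mem_range]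
    exact ⟨r, by omega, W, hW, hb⟩
end
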